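/- Let R be a complete Noetherian local Cohen–Macaulay normal domain such that every rank-one reflexive R-module whose class in Cl(R) is a torsion element is a maximal Cohen–Macaulay R-module. If R admits a basic module M giving a semi-steady splitting NCCR of R that is not steady, then the divisor class group Cl(R) is not a finite group. -/

import Mathlib

/-!
Suppose `Cl(R)` is finite. Every class is then torsion, so every divisorial module is maximal
Cohen-Macaulay, and it suffices to show that `T = ⊕ i, M i` is steady.

Divisorial modules are closed under `Hom_R` (`IsDivisorialModule.hom`): over a Noetherian domain
`Hom_R(A, B) ≅ (A ⊗ B^*)^*` for `B` reflexive, duals of finite modules are reflexive, and the rank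
is multiplicative. Hence for each summand `X = Hom_R(M i, M j)` of `End_R(T)`, the modules
`Hom_R(X, M k)` are divisorial, and therefore maximal Cohen-Macaulay; so `N = Hom_R(X, T)` has depth
at least `d = dim R`. Now `N` is a module over `Λ = End_R(T)`, which has global dimension `d`, and
the Auslander-Buchsbaum type statement `ext_vanishing` shows that `N` is `Λ`-projective. Its proof
is an induction on depth: if `x` is a non-zero-divisor on `N` in the maximal ideal, the long exact
sequence of `0 → N → N → N/xN → 0` together with Nakayama's lemma gives `Ext_Λ^i(N, -) = 0` as soon
as `Ext_Λ^{i+1}(N/xN, -) = 0`.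

Finally, `T` is a generator and `X` is reflexive, so the projectivity of `Hom_R(X, T)` over
`End_R(T)` forces `X ∈ add_R T` (`memAdd_of_projective_hom`). Summing over `i, j` yields
`End_R(T) ∈ add_R T`, i.e. `T` is steady.
-/

/- ## Preliminary definitions -/

open Module TensorProduct CategoryTheory

universe u

section Defs

variable (R : Type u) [CommRing R]

/-- `N ∈ add_R M` : `N` is isomorphic to a direct summand of a finite direct sum of
copies of `M`. -/
def MemAdd (M N : Type u) [AddCommGroup M] [Module R M] [AddCommGroup N] [Module R N] : Prop :=
  ∃ (k : ℕ) (P : ModuleCat.{u} R), Nonempty ((N × P) ≃ₗ[R] (Fin k → M))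

/-- `M` is a generator, i.e. `R ∈ add_R M`. -/
def IsGeneratorModule (M : Type u) [AddCommGroup M] [Module R M] : Prop := MemAdd R M R

/-- `M` is an indecomposable module: it is nonzero and admits no nontrivial
direct sum decomposition. -/
def IsIndecomposableModule (M : Type u) [AddCommGroup M] [Module R M] : Prop :=
  Nontrivial M ∧ ∀ A B : Submodule R M, IsCompl A B → A = ⊥ ∨ B = ⊥

/-- `M` is steady : `M` is a generator and `End_R(M) ∈ add_R M`. -/
def IsSteadyModule (M : Type u) [AddCommGroup M] [Module R M] : Prop :=
  IsGeneratorModule R M ∧ MemAdd R M (Module.End R M)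

/-- The family `(M i)` (the indecomposable decomposition of `M = ⊕ i, M i`) is semi-steady:
`M` is a generator and, for each `i`, `Hom_R(M i, M) ∈ add_R M` or
`Hom_R(M i, M) ∈ add_R M^*`. -/
def IsSemiSteadyFamily {m : ℕ} (M : Fin m → Type u) [∀ i, AddCommGroup (M i)]
    [∀ i, Module R (M i)] : Prop :=
  IsGeneratorModule R (∀ j, M j) ∧
  ∀ i, MemAdd R (∀ j, M j) (M i →ₗ[R] ∀ j, M j) ∨
       MemAdd R (Module.Dual R (∀ j, M j)) (M i →ₗ[R] ∀ j, M j)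

/-- `M` has rank one: after tensoring with the fraction field of `R`, it becomes
one-dimensional. -/
def HasRankOne (M : Type u) [AddCommGroup M] [Module R M] : Prop :=
  Module.finrank (FractionRing R) (FractionRing R ⊗[R] M) = 1

/-- A divisorial module: a finitely generated rank-one reflexive module. -/
def IsDivisorialModule (M : Type u) [AddCommGroup M] [Module R M] : Prop :=
  Module.Finite R M ∧ Module.IsReflexive R M ∧ HasRankOne R M

/-- The depth of a module over a (local) ring, defined as
`inf { i | Ext^i_R(R/m, M) ≠ 0 }`. -/
noncomputable def moduleDepth (hR : IsLocalRing R) (M : Type u) [AddCommGroup M]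
    [Module R M] : ℕ∞ :=
  letI := hR
  sInf {i : ℕ∞ | ∃ k : ℕ, i = (k : ℕ∞) ∧
    ¬ Subsingleton ↥(((Ext R (ModuleCat.{u} R) k).obj
        (Opposite.op (ModuleCat.of R (IsLocalRing.ResidueField R)))).obj (ModuleCat.of R M))}

/-- `M` is a maximal Cohen-Macaulay module over the local ring `R`:
its depth equals (i.e. is at least) the Krull dimension of `R`. -/
def IsMCM (M : Type u) [AddCommGroup M] [Module R M] : Prop :=
  ∀ hR : IsLocalRing R, ringKrullDim R ≤ (moduleDepth R hR M : WithBot ℕ∞)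

end Defs

section GlobalDim

variable (Λ : Type u) [Ring Λ]

/-- The global dimension of the ring `Λ` is at most `d`, expressed via vanishing of
`Ext^{d+1}` on the category of `Λ`-modules. -/
def GlobalDimLE (d : ℕ) : Prop :=
  ∀ M N : ModuleCat.{u} Λ,
    Subsingleton ↥(((Ext ℤ (ModuleCat.{u} Λ) (d + 1)).obj (Opposite.op M)).obj N)

/-- The global dimension of the ring `Λ`. -/
noncomputable def globalDim : ℕ∞ :=
  sInf {d : ℕ∞ | ∃ k : ℕ, d = (k : ℕ∞) ∧ GlobalDimLE Λ k}

end GlobalDim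

section Order

variable (R : Type u) [CommRing R]

/-- `Λ` is a non-singular `R`-order: `Λ` is a module-finite `R`-algebra which is
maximal Cohen-Macaulay as an `R`-module, and `gl.dim Λ_p = dim R_p` for every
prime `p` of `R`. -/
def IsNonsingularOrder (Λ : Type u) [Ring Λ] [Algebra R Λ] : Prop :=
  Module.Finite R Λ ∧ IsMCM R Λ ∧
  ∀ p : PrimeSpectrum R,
    (globalDim (Localization.AtPrime p.asIdeal ⊗[R] Λ) : WithBot ℕ∞) =
      ringKrullDim (Localization.AtPrime p.asIdeal)

/-- The nonzero finitely generated reflexive module `M` gives a non-commutative crepant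
resolution (NCCR) of `R`, i.e. `End_R(M)` is a non-singular `R`-order. -/
def GivesNCCR (M : Type u) [AddCommGroup M] [Module R M] : Prop :=
  Module.Finite R M ∧ Module.IsReflexive R M ∧ Nontrivial M ∧
  IsNonsingularOrder R (Module.End R M)

end Order

section ClassGroup

variable (R : Type u) [CommRing R] [IsDomain R]

/-- Data exhibiting the abelian group `Cl` as the divisor class group of the normal
domain `R`: `cl` assigns to each divisorial (rank-one reflexive) module its class,
two divisorial modules have the same class iff they are isomorphic, every class comes
from a divisorial module, the class of `R` is zero, and the class of the divisorial
product `(M ⊗ N)^{**}` is the sum of the classes. -/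
structure DivisorClassGroupData (Cl : Type u) [AddCommGroup Cl] where
  cl : ModuleCat.{u} R → Cl
  cl_surjective : ∀ c : Cl, ∃ M : ModuleCat.{u} R, IsDivisorialModule R ↥M ∧ cl M = c
  cl_eq_iff : ∀ M N : ModuleCat.{u} R, IsDivisorialModule R ↥M → IsDivisorialModule R ↥N →
    (cl M = cl N ↔ Nonempty (↥M ≃ₗ[R] ↥N))
  cl_ring : cl (ModuleCat.of R R) = 0
  cl_add : ∀ M N : ModuleCat.{u} R, IsDivisorialModule R ↥M → IsDivisorialModule R ↥N →
    cl M + cl N = cl (ModuleCat.of R (Module.Dual R (Module.Dual R (↥M ⊗[R] ↥N))))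

end ClassGroup

universe v w

/-! ### Ext groups over module-finite algebras -/

/-- Vanishing of the `Ext` functor defined as a left derived functor (the one used to define
depth and global dimension) implies vanishing of `Abelian.Ext`, for which the long exact sequences
are available: both are computed by cocycles on a projective resolution of `X`. -/
lemma ext_transfer {A : Type*} [Ring A] {C : Type u} [Category.{v} C] [Abelian C] [Linear A C]
    [EnoughProjectives C] [HasExt.{w} C] (X Y : C) (n : ℕ)
    (h : Subsingleton ↥(((Ext A C n).obj (Opposite.op X)).obj Y)) :
    Subsingleton (Abelian.Ext.{w} X Y n) := by
  let P := ProjectiveResolution.of X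
  have hz : Limits.IsZero ((P.complex.linearYonedaObj A Y).homology n) :=
    (Limits.IsZero.of_iso (ModuleCat.isZero_of_subsingleton _) (P.isoExt n Y).symm)
  rw [← HomologicalComplex.exactAt_iff_isZero_homology] at hz
  refine subsingleton_of_forall_eq 0 fun α => ?_
  obtain ⟨f, hf, rfl⟩ := P.extMk_surjective α (n+1) rfl
  cases n with
  | zero =>
    rw [HomologicalComplex.exactAt_iff' _ 0 0 1 (by simp) (by simp),
      ShortComplex.moduleCat_exact_iff] at hz
    obtain ⟨g, hg⟩ := hz f hf
    -- In degree `0` every coboundary is zero, because no differential enters.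
    have h0 : f = 0 := by
      refine hg.symm.trans ?_
      have : ((P.complex.linearYonedaObj A Y).sc' 0 0 1).f = 0 :=
        (P.complex.linearYonedaObj A Y).shape 0 0 (by simp)
      rw [this]; rfl
    subst h0
    simp
  | succ n =>
    rw [HomologicalComplex.exactAt_iff' _ n (n+1) (n+2) (by simp) (by simp),
      ShortComplex.moduleCat_exact_iff] at hz
    obtain ⟨g, hg⟩ := hz f hf
    rw [P.extMk_eq_zero_iff f (n+2) rfl hf n rfl]
    exact ⟨g, hg⟩

section
variable {R : Type u} [CommRing R] {Γ : Type u} [Ring Γ] [Algebra R Γ]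
open scoped ModuleCat.Algebra
open Abelian

/-- Over a module-finite algebra `Γ` over a Noetherian ring `R`, the modules `Ext_Γ^i(N, L)` are
finite over `R`: shift dimension along `0 → K → Γ^m → N → 0`. -/
lemma finite_ext_of_algebra [IsNoetherianRing R] [Module.Finite R Γ] (N L : ModuleCat.{u} Γ)
    [Module.Finite Γ N] [Module.Finite Γ L] (i : ℕ) : Module.Finite R (Ext N L i) := by
  have : IsNoetherianRing Γ := isNoetherian_of_tower R inferInstance
  induction i generalizing N with
  | zero =>
    have : Module.Finite R L := Module.Finite.trans Γ L
    have : Module.Finite R N := Module.Finite.trans Γ N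
    have : Module.Finite R (N →ₗ[Γ] L) :=
      Module.Finite.of_injective (LinearMap.restrictScalarsₗ R Γ N L R)
        (LinearMap.restrictScalars_injective _)
    have e : (N ⟶ L) ≃ₗ[R] (N →ₗ[Γ] L) := 
      { ModuleCat.homAddEquiv with
        map_smul' := fun r f => by 
          rfl }
    exact Module.Finite.equiv ((Ext.linearEquiv₀ (R := R)).trans e).symm
  | succ n ih =>
    obtain ⟨m, f, surjf⟩ := Module.Finite.exists_fin' Γ N
    let exac := LinearMap.shortExact_shortComplexKer surjf
    exact Module.Finite.of_surjective (exac.extClass.precompOfLinear R L (add_comm 1 n))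
      (precomp_extClass_surjective_of_projective_X₂ L exac n)

/-- A finite module `N` is projective once `Ext¹(N, L) = 0` for *finite* `L`: it is enough to split
a presentation `0 → K → Γ^m → N → 0`. -/
lemma projective_of_forall_finite [IsNoetherianRing Γ] (N : ModuleCat.{u} Γ) [Module.Finite Γ N]
    (h : ∀ L : ModuleCat.{u} Γ, Module.Finite Γ L → Subsingleton (Ext N L 1)) :
    Module.Projective Γ N := by
  obtain ⟨m, f, surjf⟩ := Module.Finite.exists_fin' Γ N
  let S : ShortComplex (ModuleCat.{u} Γ) := f.shortComplexKer
  have hS : S.ShortExact := LinearMap.shortExact_shortComplexKer surjf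
  have : Subsingleton (Ext N S.X₁ 1) := h S.X₁ inferInstance
  rcases Ext.covariant_sequence_exact₃ N hS (Ext.mk₀ (𝟙 N)) (zero_add 1)
    (Subsingleton.eq_zero _) with ⟨f', hf'⟩
  rcases (Ext.mk₀_bijective N S.X₂).2 f' with ⟨f, hf⟩
  rw [← hf, Ext.mk₀_comp_mk₀, (Ext.mk₀_bijective _ _).1.eq_iff] at hf'
  rw [IsProjective.iff_projective]
  exact (Retract.mk f S.g hf').projective

variable [IsLocalRing R]
open IsLocalRing

lemma exists_regular_of_ext_zero [IsNoetherianRing R] (N : ModuleCat.{u} R) [Module.Finite R N]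
    (h : Subsingleton (Ext (ModuleCat.of R (ResidueField R)) N 0)) :
    ∃ x ∈ maximalIdeal R, IsSMulRegular N x := by
  have : Subsingleton (ModuleCat.of R (ResidueField R) ⟶ N) :=
    Ext.homEquiv₀.subsingleton_congr.mp h
  have hsub : Subsingleton (ResidueField R →ₗ[R] N) :=
    (ModuleCat.homEquiv (M := ModuleCat.of R (ResidueField R)) (N := N)).symm.subsingleton
  have : Module.Finite R (ResidueField R) := inferInstance
  obtain ⟨r, hr, hreg⟩ := IsSMulRegular.subsingleton_linearMap_iff.mp hsub
  refine ⟨r, ?_, hreg⟩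
  rw [← Ideal.annihilator_quotient (I := maximalIdeal R)]
  exact hr

/-- If `Γ` has global dimension at most `d` and the finite `Γ`-module `N` has depth at least `j` over
`R`, then `Ext_Γ^i(N, L) = 0` for every finite `L` and every `i > d - j`. -/
theorem ext_vanishing [IsNoetherianRing R] [Module.Finite R Γ] (d : ℕ)
    (hgd : ∀ (N L : ModuleCat.{u} Γ) (i : ℕ), d < i → Subsingleton (Ext N L i)) (j : ℕ)
    (N : ModuleCat.{u} Γ) [Module.Finite Γ N]
    (hN : ∀ i < j, Subsingleton (Ext (ModuleCat.of R (ResidueField R))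
      ((ModuleCat.restrictScalars (algebraMap R Γ)).obj N) i))
    (L : ModuleCat.{u} Γ) [Module.Finite Γ L] (i : ℕ) (hi : d < i + j) :
    Subsingleton (Ext N L i) := by
  induction j generalizing N i with
  | zero => exact hgd N L i hi
  | succ j ih =>
    let F := ModuleCat.restrictScalars (algebraMap R Γ)
    have hfin : Module.Finite R (F.obj N) := Module.Finite.trans (R := R) Γ N
    obtain ⟨x, hx, hreg⟩ := exists_regular_of_ext_zero (F.obj N) (hN 0 (by omega))
    let S : ShortComplex (ModuleCat.{u} Γ) := 
      ShortComplex.mk (x • 𝟙 N) (ModuleCat.ofHom (LinearMap.range (x • 𝟙 N : N ⟶ N).hom).mkQ) (by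
        ext y
        exact (Submodule.Quotient.mk_eq_zero _).mpr ⟨y, rfl⟩)
    have hinj : Function.Injective S.f := hreg
    have hsurj : Function.Surjective S.g := Submodule.mkQ_surjective _
    have hex : Function.Exact S.f S.g := LinearMap.exact_map_mkQ_range _
    have hS : S.ShortExact :=
      { exact := (ShortComplex.ShortExact.moduleCat_exact_iff_function_exact _).mpr hex
        mono_f := (ModuleCat.mono_iff_injective _).mpr hinj
        epi_g := (ModuleCat.epi_iff_surjective _).mpr hsurj }
    have hFS : (S.map F).ShortExact :=
      { exact := (ShortComplex.ShortExact.moduleCat_exact_iff_function_exact _).mpr hex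
        mono_f := (ModuleCat.mono_iff_injective _).mpr hinj
        epi_g := (ModuleCat.epi_iff_surjective _).mpr hsurj }
    have : Module.Finite Γ S.X₃ := Module.Finite.of_surjective S.g.hom hsurj
    -- `N/xN` has depth at least `j`, one less than `N`.
    have h3 : Subsingleton (Ext S.X₃ L (i + 1)) := by
      refine ih S.X₃ (fun a ha => ?_) (i+1) (by omega)
      refine subsingleton_of_forall_eq 0 fun e => ?_
      have s1 : Subsingleton (Ext (ModuleCat.of R (ResidueField R)) (S.map F).X₁ (a + 1)) :=
        hN (a+1) (by omega)
      have s0 : Subsingleton (Ext (ModuleCat.of R (ResidueField R)) (S.map F).X₂ a) :=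
        hN a (by omega)
      obtain ⟨e₂, rfl⟩ := Ext.covariant_sequence_exact₃ _ hFS e rfl (s1.elim _ _)
      exact (congrArg (fun z => Ext.comp z (Ext.mk₀ (S.map F).g) (add_zero a))
        (s0.elim e₂ 0)).trans (Ext.zero_comp _ _ _ _ _)
    have hf := finite_ext_of_algebra (R := R) N L i
    -- `Ext^{i+1}(N/xN, L) = 0` makes multiplication by `x` surjective on `Ext^i(N, L)`.
    have hle : (⊤ : Submodule R (Ext N L i)) ≤ maximalIdeal R • ⊤ := by
      intro e _
      obtain ⟨e', rfl⟩ := Ext.contravariant_sequence_exact₁ hS L e (add_comm 1 i) (h3.elim _ _)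
      rw [show S.f = x • 𝟙 N from rfl, Ext.mk₀_smul, Ext.smul_comp, Ext.mk₀_id_comp]
      exact Submodule.smul_mem_smul hx trivial
    have := Submodule.eq_bot_of_le_smul_of_le_jacobson_bot _ _ hf.1 hle (maximalIdeal_le_jacobson _)
    exact (Submodule.subsingleton_iff R).mp (subsingleton_of_bot_eq_top this.symm)
end

/-! ### Ranks and reflexivity over a Noetherian domain -/

section
variable {R : Type u} [CommRing R]

lemma finrank_fractionRing_tensor (N : Type u) [AddCommGroup N] [Module R N] :
    Module.finrank (FractionRing R) (FractionRing R ⊗[R] N) = Module.finrank R N := by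
  rw [IsLocalization.finrank_eq (R := R) (FractionRing R) (nonZeroDivisors R) le_rfl,
    IsLocalizedModule.finrank_eq (nonZeroDivisors R) (TensorProduct.mk R (FractionRing R) N 1)
      le_rfl]

variable [IsDomain R] [IsNoetherianRing R]

lemma finrank_hom_domain (A B : Type u) [AddCommGroup A] [Module R A] [AddCommGroup B] [Module R B]
    [Module.Finite R A] [Module.Finite R B] :
    Module.finrank R (A →ₗ[R] B) = Module.finrank R A * Module.finrank R B := by
  have : Module.FinitePresentation R A := Module.finitePresentation_of_finite R A
  have h1 := IsLocalizedModule.finrank_eq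
      (N := FractionRing R ⊗[R] A →ₗ[FractionRing R] FractionRing R ⊗[R] B) (nonZeroDivisors R)
      (IsLocalizedModule.mapExtendScalars (nonZeroDivisors R)
        (TensorProduct.mk R (FractionRing R) A 1) (TensorProduct.mk R (FractionRing R) B 1)
        (FractionRing R)) le_rfl
  have h2 := IsLocalization.finrank_eq (R := R)
    (N := FractionRing R ⊗[R] A →ₗ[FractionRing R] FractionRing R ⊗[R] B)
    (FractionRing R) (nonZeroDivisors R) le_rfl
  rw [← h1, ← h2, Module.finrank_linearMap, finrank_fractionRing_tensor,
    finrank_fractionRing_tensor]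

/-- The transpose of `C → C^{**}` is a retraction of `C^* → C^{***}`; its kernel is torsion-free and
has rank zero, so it vanishes. -/
lemma dual_isReflexive (C : Type u) [AddCommGroup C] [Module R C] [Module.Finite R C] :
    Module.IsReflexive R (Module.Dual R C) := by
  let D := Module.Dual R C
  have hfD : Module.Finite R D := inferInstance
  let r : Dual R (Dual R D) →ₗ[R] D := (Dual.eval R C).dualMap
  have hr : ∀ x, r (Dual.eval R D x) = x := fun x => by ext; rfl
  have hrs : Function.Surjective r := fun x => ⟨_, hr x⟩
  have hrank : Module.finrank R (Dual R (Dual R D)) = Module.finrank R D := by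
    simp only [Module.Dual, finrank_hom_domain, Module.finrank_self, mul_one]
  have hk : Module.finrank R (LinearMap.ker r) = 0 := by
    have h1 := Submodule.finrank_quotient_add_finrank (LinearMap.ker r)
    have h2 := (LinearMap.quotKerEquivOfSurjective r hrs).finrank_eq
    omega
  have htf : Module.IsTorsionFree R (LinearMap.ker r) := inferInstance
  have hsub : Subsingleton (LinearMap.ker r) := by
    exact Module.finrank_zero_iff.mp hk
  have hinj : Function.Injective r := by
    rw [← LinearMap.ker_eq_bot]
    exact (Submodule.subsingleton_iff_eq_bot).mp hsub
  refine ⟨⟨Function.LeftInverse.injective hr, fun y => ⟨r y, hinj (hr _)⟩⟩⟩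

lemma hom_isReflexive (A B : Type u) [AddCommGroup A] [Module R A] [AddCommGroup B] [Module R B]
    [Module.Finite R A] [Module.Finite R B] [Module.IsReflexive R B] :
    Module.IsReflexive R (A →ₗ[R] B) := by
  have := dual_isReflexive (R := R) (A ⊗[R] Dual R B)
  have e : Dual R (A ⊗[R] Dual R B) ≃ₗ[R] (A →ₗ[R] B) :=
    (TensorProduct.lift.equiv (RingHom.id R) A (Dual R B) R).symm ≪≫ₗ
      LinearEquiv.congrRight (evalEquiv R B).symm
  exact Module.equiv e
end

/-! ### The class `add T` -/

section
variable {R : Type u} [CommRing R]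

/-- A retract of `T^ι` lies in `add T`; the complement is the kernel of the retraction. -/
lemma memAdd_of_retract {T N : Type u} [AddCommGroup T] [Module R T] [AddCommGroup N] [Module R N]
    {ι : Type} [Finite ι] (i : N →ₗ[R] (ι → T)) (p : (ι → T) →ₗ[R] N) (h : ∀ x, p (i x) = x) :
    MemAdd R T N := by
  obtain ⟨k, ⟨e⟩⟩ := Finite.exists_equiv_fin ι
  suffices E : (N × LinearMap.ker p) ≃ₗ[R] (ι → T) from
    ⟨k, ModuleCat.of R (LinearMap.ker p), ⟨E ≪≫ₗ LinearEquiv.funCongrLeft R T e.symm⟩⟩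
  refine LinearEquiv.ofBijective (LinearMap.coprod i (LinearMap.ker p).subtype) ⟨?_, fun y => ?_⟩
  · rw [injective_iff_map_eq_zero]
    rintro ⟨x, y, hy⟩ hxy
    have hxy' : i x + y = 0 := hxy
    have hx : x = 0 := by
      have := congrArg p hxy'
      rwa [map_add, h, LinearMap.mem_ker.mp hy, add_zero, map_zero] at this
    subst hx
    rw [map_zero, zero_add] at hxy'
    subst hxy'
    rfl
  · refine ⟨(p y, ⟨y - i (p y), ?_⟩), ?_⟩
    · rw [LinearMap.mem_ker, map_sub, h, sub_self]
    · exact add_sub_cancel (i (p y)) y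

lemma MemAdd.exists_retract {T N : Type u} [AddCommGroup T] [Module R T] [AddCommGroup N]
    [Module R N] (h : MemAdd R T N) :
    ∃ (k : ℕ) (i : N →ₗ[R] (Fin k → T)) (p : (Fin k → T) →ₗ[R] N), ∀ x, p (i x) = x := by
  obtain ⟨k, P, ⟨e⟩⟩ := h
  exact ⟨k, e.toLinearMap ∘ₗ LinearMap.inl R N P, LinearMap.fst R N P ∘ₗ e.symm.toLinearMap,
    fun x => by simp⟩

lemma MemAdd.congr {T N N' : Type u} [AddCommGroup T] [Module R T] [AddCommGroup N]
    [Module R N] [AddCommGroup N'] [Module R N'] (h : MemAdd R T N) (e : N ≃ₗ[R] N') :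
    MemAdd R T N' := by
  obtain ⟨k, i, p, hip⟩ := h.exists_retract
  exact memAdd_of_retract (i ∘ₗ e.symm.toLinearMap) (e.toLinearMap ∘ₗ p) fun x => by simp [hip]

lemma MemAdd.pi {T : Type u} [AddCommGroup T] [Module R T] {ι : Type} [Finite ι] {N : ι → Type u}
    [∀ i, AddCommGroup (N i)] [∀ i, Module R (N i)] (h : ∀ i, MemAdd R T (N i)) :
    MemAdd R T (∀ i, N i) := by
  choose k f p hfp using fun i => (h i).exists_retract
  refine memAdd_of_retract (ι := Σ i, Fin (k i))
    (LinearMap.pi fun q => LinearMap.proj q.2 ∘ₗ f q.1 ∘ₗ LinearMap.proj q.1)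
    (LinearMap.pi fun i => p i ∘ₗ LinearMap.pi fun j => LinearMap.proj (⟨i, j⟩ : Σ i, Fin (k i))) ?_
  intro x
  funext i
  exact hfp i (x i)

/-- If `T` is a generator and `X` is reflexive, then `X ∈ add T` as soon as `Hom_R(X, T)` is
projective over `End_R(T)`. A dual basis `(a_j, h_j)` of `Hom_R(X, T)` gives `φ = ∑ j, a_j(φ) ∘ h_j`.
Writing `R` as a retract of `T^k` via `ι` and `π`, and applying this to the maps `ι_s ∘ f`, one sees
that every functional `f` on `X` factors through `h = (h_j) : X → T^l`, linearly in `f`; so `h` has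
a retraction with values in `X^{**} = X`. -/
lemma memAdd_of_projective_hom {T X : Type u} [AddCommGroup T] [Module R T] [AddCommGroup X]
    [Module R X] [Module.IsReflexive R X] [Module.Finite R (X →ₗ[R] T)] (hT : MemAdd R T R)
    (hproj : Module.Projective (Module.End R T) (X →ₗ[R] T)) : MemAdd R T X := by
  obtain ⟨k, ι, π, hπι⟩ := hT.exists_retract
  have : Module.Finite (Module.End R T) (X →ₗ[R] T) :=
    Module.Finite.of_restrictScalars_finite R (Module.End R T) (X →ₗ[R] T)
  obtain ⟨l, b, a, -, -, hba⟩ :=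
    Module.Finite.exists_comp_eq_id_of_projective (Module.End R T) (X →ₗ[R] T)
  let h : Fin l → X →ₗ[R] T := fun j => b (Pi.single j 1)
  have hb : ∀ c, b c = ∑ j, c j ∘ₗ h j := by
    intro c
    conv_lhs => rw [pi_eq_sum_univ' c]
    rw [map_sum]
    refine Finset.sum_congr rfl fun j _ => ?_
    rw [map_smul]
    congr 2
  have key : ∀ (φ : X →ₗ[R] T) x, ∑ j, a φ j (h j x) = φ x := by
    intro φ x
    have h1 := (hb (a φ)).symm.trans (LinearMap.congr_fun hba φ)
    simpa using LinearMap.congr_fun h1 x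
  have a_smul : ∀ (r : R) φ, a (r • φ) = r • a φ := fun r φ => by
    rw [← algebraMap_smul (Module.End R T) r φ, map_smul, algebraMap_smul]
  let B : (Fin l → T) →ₗ[R] Dual R (Dual R X) := LinearMap.mk₂ R
    (fun y f => π fun s => ∑ j, a ((LinearMap.proj s ∘ₗ ι) ∘ₗ f) j (y j))
    (fun y y' f => by
      rw [← map_add]; congr 1; funext s; simp [Finset.sum_add_distrib])
    (fun r y f => by
      rw [← map_smul]; congr 1; funext s; simp [Finset.smul_sum])
    (fun y f f' => by
      rw [← map_add]; congr 1; funext s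
      simp [LinearMap.comp_add, Finset.sum_add_distrib])
    (fun r y f => by
      rw [← map_smul]; congr 1; funext s
      simp [LinearMap.comp_smul, a_smul, Finset.smul_sum])
  refine memAdd_of_retract (LinearMap.pi h) ((evalEquiv R X).symm.toLinearMap ∘ₗ B) fun x => ?_
  have : B (LinearMap.pi h x) = evalEquiv R X x := by
    ext f
    change π (fun s => ∑ j, a ((LinearMap.proj s ∘ₗ ι) ∘ₗ f) j (h j x)) = f x
    simp only [key]
    exact hπι (f x)
  rw [LinearMap.comp_apply, this]
  exact (evalEquiv R X).symm_apply_apply x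
end

/-! ### Maximal Cohen-Macaulay modules over a non-singular order -/

section
open scoped ModuleCat.Algebra
open Abelian

/-- If the identity of `Y` factors through a finite family `Z i`, vanishing of `Ext(X, Z i)` for all
`i` implies vanishing of `Ext(X, Y)`. -/
lemma ext_subsingleton_of_sum {C : Type u} [Category.{v} C] [Abelian C] [HasExt.{w} C]
    {X Y : C} {ι : Type} [Fintype ι] {Z : ι → C} (n : ℕ) (h : ∀ i, Subsingleton (Ext X (Z i) n))
    (f : ∀ i, Y ⟶ Z i) (g : ∀ i, Z i ⟶ Y) (hfg : ∑ i, f i ≫ g i = 𝟙 Y) :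
    Subsingleton (Ext X Y n) := by
  refine subsingleton_of_forall_eq 0 fun e => ?_
  let F : (Y ⟶ Y) →+ Ext X Y n :=
    AddMonoidHom.mk' (fun t => e.comp (Ext.mk₀ t) (add_zero n)) fun a b => by
      rw [Ext.mk₀_add, Ext.comp_add]
  have hF : F (𝟙 Y) = e := Ext.comp_mk₀_id e
  rw [← hF, ← hfg, map_sum]
  refine Finset.sum_eq_zero fun i _ => ?_
  change e.comp (Ext.mk₀ (f i ≫ g i)) (add_zero n) = 0
  rw [← Ext.mk₀_comp_mk₀, ← Ext.comp_assoc e (Ext.mk₀ (f i)) (Ext.mk₀ (g i)) (add_zero n)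
    (add_zero 0) (by omega)]
  rw [(h i).elim (e.comp (Ext.mk₀ (f i)) (add_zero n)) 0, Ext.zero_comp]

lemma ext_eq_zero_of_isMCM {R : Type u} [CommRing R] [IsLocalRing R] {d : ℕ}
    (hd : ringKrullDim R = d) (X : Type u) [AddCommGroup X] [Module R X] (h : IsMCM R X)
    (i : ℕ) (hi : i < d) :
    Subsingleton (Ext (ModuleCat.of R (IsLocalRing.ResidueField R)) (ModuleCat.of R X) i) := by
  apply ext_transfer (A := R)
  by_contra hns
  have h1 := h inferInstance
  rw [hd] at h1
  have h2 : moduleDepth R inferInstance X ≤ (i : ℕ∞) := sInf_le ⟨i, rfl, hns⟩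
  have h3 : ((d : ℕ∞) : WithBot ℕ∞) ≤ ((i : ℕ∞) : WithBot ℕ∞) :=
    le_trans (by exact_mod_cast h1) (WithBot.coe_le_coe.mpr h2)
  have : d ≤ i := by exact_mod_cast h3
  omega

lemma ext_eq_zero_of_globalDim {Γ : Type u} [Ring Γ] {d : ℕ} (h : globalDim Γ = d)
    (N L : ModuleCat.{u} Γ) (i : ℕ) (hi : d < i) : Subsingleton (Ext N L i) := by
  -- The infimum defining `globalDim` is attained, since its value is not `⊤`.
  have hne : {d : ℕ∞ | ∃ k : ℕ, d = (k : ℕ∞) ∧ GlobalDimLE Γ k}.Nonempty := by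
    by_contra hemp
    rw [Set.not_nonempty_iff_eq_empty] at hemp
    rw [globalDim, hemp, sInf_empty] at h
    exact ENat.top_ne_natCast d h
  obtain ⟨k, hk, hle⟩ := csInf_mem hne
  have hdk : d = k := by
    have : (d : ℕ∞) = k := h.symm.trans hk
    exact_mod_cast this
  subst hdk
  have := hasProjectiveDimensionLT_of_enoughInjectives N (d + 1)
    fun Y => ext_transfer (A := ℤ) N Y (d + 1) (hle N Y)
  exact HasProjectiveDimensionLT.subsingleton N (d + 1) i hi L

variable {R : Type u} [CommRing R] [IsLocalRing R]

/-- If `T = ⊕ i, M i` and all `Hom_R(X, M i)` are maximal Cohen-Macaulay, then so is `Hom_R(X, T)`,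
in the form of vanishing of `Ext_R^i(R/m, -)` for `i < dim R`. The module `Y` is an isomorphic copy
of `Hom_R(X, T)`, such as its restriction of scalars from another ring. -/
lemma ext_hom_subsingleton {d : ℕ} (hd : ringKrullDim R = d)
    {T X : Type u} [AddCommGroup T] [Module R T] [AddCommGroup X] [Module R X]
    {Y : ModuleCat.{u} R} (E : Y ≃ₗ[R] (X →ₗ[R] T))
    {ι : Type} [Fintype ι] [DecidableEq ι] {M : ι → Type u} [∀ i, AddCommGroup (M i)]
    [∀ i, Module R (M i)] (eT : T ≃ₗ[R] ∀ i, M i) (hM : ∀ i, IsMCM R (X →ₗ[R] M i))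
    (i : ℕ) (hi : i < d) :
    Subsingleton (Ext (ModuleCat.of R (IsLocalRing.ResidueField R)) Y i) := by
  let f₀ : ∀ k, Y →ₗ[R] (X →ₗ[R] M k) := fun k =>
    LinearMap.compRight R (LinearMap.proj k ∘ₗ eT.toLinearMap) ∘ₗ E.toLinearMap
  let g₀ : ∀ k, (X →ₗ[R] M k) →ₗ[R] Y := fun k =>
    E.symm.toLinearMap ∘ₗ LinearMap.compRight R (eT.symm.toLinearMap ∘ₗ LinearMap.single R M k)
  refine ext_subsingleton_of_sum i
    (fun k => ext_eq_zero_of_isMCM hd (X →ₗ[R] M k) (hM k) i hi)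
    (fun k => ModuleCat.ofHom (f₀ k)) (fun k => ModuleCat.ofHom (g₀ k)) ?_
  ext φ
  have hs : ∀ φ : X →ₗ[R] T, ∑ k, (eT.symm.toLinearMap ∘ₗ LinearMap.single R M k) ∘ₗ
      ((LinearMap.proj k ∘ₗ eT.toLinearMap) ∘ₗ φ) = φ := by
    intro φ
    ext x
    simp [LinearMap.sum_apply, ← map_sum, Finset.univ_sum_single]
  rw [ModuleCat.hom_sum]
  refine (LinearMap.sum_apply _ _ _).trans ?_
  refine (map_sum E.symm _ _).symm.trans ?_
  exact (congrArg E.symm (hs (E φ))).trans (E.symm_apply_apply φ)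

/-- If `End_R(T)` is a non-singular order, `T = ⊕ i, M i`, and all `Hom_R(X, M i)` are maximal
Cohen-Macaulay, then `Hom_R(X, T)` is projective over `End_R(T)`. The hypothesis on the global
dimension is used at the maximal ideal only, where `R_m = R`; the argument runs over
`Γ = R_m ⊗ End_R(T)` and projectivity is transported along `Γ ≅ End_R(T)`. -/
lemma projective_hom_of_isMCM [IsNoetherianRing R] {T X : Type u}
    [AddCommGroup T] [Module R T] [AddCommGroup X]
    [Module R X] [Module.Finite R T] [Module.Finite R X] (hΛ : IsNonsingularOrder R (Module.End R T))
    {ι : Type} [Fintype ι] [DecidableEq ι] {M : ι → Type u} [∀ i, AddCommGroup (M i)]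
    [∀ i, Module R (M i)] (eT : T ≃ₗ[R] ∀ i, M i) (hM : ∀ i, IsMCM R (X →ₗ[R] M i)) :
    Module.Projective (Module.End R T) (X →ₗ[R] T) := by
  obtain ⟨hfin, -, hgd⟩ := hΛ
  have hunits : (IsLocalRing.maximalIdeal R).primeCompl ≤ IsUnit.submonoid R := fun x hx => by
    by_contra hu
    exact hx ((IsLocalRing.mem_maximalIdeal x).mpr hu)
  let A := Localization.AtPrime (IsLocalRing.maximalIdeal R)
  let eA : R ≃ₐ[R] A := IsLocalization.atUnits R (IsLocalRing.maximalIdeal R).primeCompl hunits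
  let Λ := Module.End R T
  let Γ := A ⊗[R] Λ
  let e : Γ ≃ₐ[R] Λ := (Algebra.TensorProduct.congr eA.symm AlgEquiv.refl).trans
    (Algebra.TensorProduct.lid R Λ)
  obtain ⟨d, hd⟩ : ∃ d : ℕ, ringKrullDim R = d := by
    have h1 := ringKrullDim_lt_top (R := R)
    have h2 := ringKrullDim_nonneg_of_nontrivial (R := R)
    generalize ringKrullDim R = t at h1 h2
    induction t with
    | bot => simp at h2
    | coe t =>
      induction t with
      | top => simp at h1
      | coe t => exact ⟨t, rfl⟩
  have hgd' : globalDim Γ = d := by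
    have h := hgd ⟨IsLocalRing.maximalIdeal R, inferInstance⟩
    rw [← ringKrullDim_eq_of_ringEquiv eA.toRingEquiv, hd] at h
    exact_mod_cast h
  let N₀ := X →ₗ[R] T
  let : Module Γ N₀ := Module.compHom N₀ (e : Γ →+* Λ)
  have hsmul : ∀ (γ : Γ) (φ : N₀), γ • φ = e γ • φ := fun _ _ => rfl
  have : IsScalarTower R Γ N₀ := ⟨fun r γ φ => by
    rw [hsmul, hsmul, map_smul, smul_assoc]⟩
  have : Module.Finite R Γ := Module.Finite.equiv e.symm.toLinearEquiv
  have : Module.Finite R N₀ := inferInstance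
  have : Module.Finite Γ N₀ := Module.Finite.of_restrictScalars_finite R Γ N₀
  have : IsNoetherianRing Γ := isNoetherian_of_tower R inferInstance
  let N : ModuleCat.{u} Γ := ModuleCat.of Γ N₀
  have : Module.Finite Γ N := ‹Module.Finite Γ N₀›
  let E₀ : (ModuleCat.restrictScalars.{u} (algebraMap R Γ)).obj N ≃ₗ[R] N₀ :=
    { AddEquiv.refl N₀ with map_smul' := fun r φ => algebraMap_smul (M := N₀) Γ r φ }
  have hN := fun i hi => ext_hom_subsingleton hd E₀ eT hM i hi
  have hproj : Module.Projective Γ N := projective_of_forall_finite N fun L _ =>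
    ext_vanishing (R := R) d (fun N L i hi => ext_eq_zero_of_globalDim hgd' N L i hi) d N hN L 1
      (by omega)
  have hproj' : Module.Projective Γ N₀ := hproj
  let := RingHomInvPair.of_ringEquiv e.toRingEquiv
  let := RingHomInvPair.symm (RingHomClass.toRingHom e.toRingEquiv)
    (RingHomClass.toRingHom e.toRingEquiv.symm)
  let E : N₀ ≃ₛₗ[RingHomClass.toRingHom e.toRingEquiv] N₀ :=
    { AddEquiv.refl N₀ with map_smul' := fun γ φ => rfl }
  exact Module.Projective.of_equiv E
end

/-! ### Divisorial modules -/

section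
lemma IsDivisorialModule.hom {R : Type u} [CommRing R] [IsDomain R] [IsNoetherianRing R]
    {A B : Type u} [AddCommGroup A] [Module R A] [AddCommGroup B] [Module R B]
    (hA : IsDivisorialModule R A) (hB : IsDivisorialModule R B) :
    IsDivisorialModule R (A →ₗ[R] B) := by
  obtain ⟨hAf, -, hA1⟩ := hA
  obtain ⟨hBf, hBr, hB1⟩ := hB
  rw [HasRankOne, finrank_fractionRing_tensor] at hA1 hB1
  refine ⟨inferInstance, hom_isReflexive A B, ?_⟩
  rw [HasRankOne, finrank_fractionRing_tensor, finrank_hom_domain, hA1, hB1]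

lemma memAdd_end_pi {R : Type u} [CommRing R] {T : Type u} [AddCommGroup T] [Module R T]
    {ι : Type} [Fintype ι] [DecidableEq ι] {M : ι → Type u} [∀ i, AddCommGroup (M i)]
    [∀ i, Module R (M i)] (h : ∀ i j, MemAdd R T (M i →ₗ[R] M j)) :
    MemAdd R T (Module.End R (∀ i, M i)) := by
  let e : ∀ i, (∀ j, M i →ₗ[R] M j) ≃ₗ[R] (M i →ₗ[R] ∀ j, M j) := fun i =>
    { toFun := LinearMap.pi
      invFun := fun f j => LinearMap.proj j ∘ₗ f
      map_add' := fun _ _ => rfl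
      map_smul' := fun _ _ => rfl
      left_inv := fun _ => rfl
      right_inv := fun _ => rfl }
  exact (MemAdd.pi fun i => (MemAdd.pi (h i)).congr (e i)).congr (LinearMap.lsum R M R)
end

/-- Let `R` be a complete Noetherian local Cohen-Macaulay normal domain
such that every rank-one reflexive `R`-module whose class in `Cl(R)` is a torsion element
is a maximal Cohen-Macaulay `R`-module. If `R` admits a basic module `M = ⊕_{i=0}^n M i`
giving a semi-steady splitting NCCR of `R` that is not steady, then the divisor class
group `Cl(R)` is not a finite group. -/
theorem classGroup_infinite_of_semisteady_splitting_NCCR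
    (R : Type u) [CommRing R] [IsNoetherianRing R] [IsDomain R] [IsIntegrallyClosed R]
    [IsLocalRing R] [IsAdicComplete (IsLocalRing.maximalIdeal R) R]
    (hCM : IsMCM R R)
    (Cl : Type u) [AddCommGroup Cl] (hCl : DivisorClassGroupData R Cl)
    (htors : ∀ N : ModuleCat.{u} R, IsDivisorialModule R ↥N →
      IsOfFinAddOrder (hCl.cl N) → IsMCM R ↥N)
    (n : ℕ) (M : Fin (n + 1) → Type u) [∀ i, AddCommGroup (M i)] [∀ i, Module R (M i)]
    (hsplit : ∀ i, IsDivisorialModule R (M i))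
    (hind : ∀ i, IsIndecomposableModule R (M i))
    (hbasic : ∀ i j, i ≠ j → ¬ Nonempty (M i ≃ₗ[R] M j))
    (hNCCR : GivesNCCR R (∀ i, M i))
    (hss : IsSemiSteadyFamily R M)
    (hnotsteady : ¬ IsSteadyModule R (∀ i, M i)) :
    ¬ Finite Cl := by
  intro hfin
  have hMCM : ∀ (N : Type u) [AddCommGroup N] [Module R N], IsDivisorialModule R N → IsMCM R N :=
    fun N _ _ hN => htors (ModuleCat.of R N) hN (isOfFinAddOrder_of_finite _)
  obtain ⟨hTf, -, -, hΛ⟩ := hNCCR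
  refine hnotsteady ⟨hss.1, memAdd_end_pi fun i j => ?_⟩
  have hX := (hsplit i).hom (hsplit j)
  have := hX.1
  have := hX.2.1
  exact memAdd_of_projective_hom hss.1
    (projective_hom_of_isMCM hΛ (LinearEquiv.refl R _) fun k => hMCM _ (hX.hom (hsplit k)))
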